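/- Let s ≥ 6 and set A(c) = (Q/2)·c. Then the function c ↦ OPT(A(c), c, s) is strictly decreasing on 0 < c ≤ 1/Q. -/

import Mathlib

/-- `q(x) = exp(x) - x - 1`. -/
noncomputable def q (x : ℝ) : ℝ := Real.exp x - x - 1

/-- `Q(x) = x·(exp(x) − 1)/(exp(x) − x − 1)`. -/
noncomputable def Qf (x : ℝ) : ℝ := x * (Real.exp x - 1) / (Real.exp x - x - 1)

/-- `OPT(a,c,s) = (3·q(sa)/q(s) + 1)·(1/(1+ac))^Q·((1+c)^Q + 3·(1−c/3)^Q)` with `Q = Q(s)`. -/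
noncomputable def OPT4 (a c s : ℝ) : ℝ :=
  (3 * q (s*a) / q s + 1) * (1/(1+a*c)) ^ (Qf s) *
  ((1+c) ^ (Qf s) + 3 * (1 - c/3) ^ (Qf s))

/-!
On the curve `a = (Q/2)·c` each of the three factors of `OPT` is positive, and its logarithmic
derivative in `c` is compared with `Q²c`. Since `Q ≥ s ≥ 6` and `Qc ≤ 1`, the first factor
contributes at most `9/20` (convexity of `exp`, and `10 s ≤ 3 exp (s/2)`), the second at most
`-12/13` (because `Qc²/2 ≤ 1/12`), and the third at most `4/9` (because the two powers in it have
ratio at most `exp (4Qc/3)`, and `3(eᵘ - 1) ≤ u(eᵘ + 3)`). Finally `9/20 + 4/9 < 12/13`.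
-/

open Real Set

section LogDeriv

variable {f : ℝ → ℝ}

lemma strictAntiOn_of_logDeriv_neg {D : Set ℝ} (hD : Convex ℝ D) (hf : ContinuousOn f D)
    (hpos : ∀ x ∈ interior D, 0 < f x) (hneg : ∀ x ∈ interior D, logDeriv f x < 0) :
    StrictAntiOn f D :=
  strictAntiOn_of_deriv_neg hD hf fun x hx ↦ by
    simpa only [logDeriv_apply, div_lt_iff₀ (hpos x hx), zero_mul] using hneg x hx

lemma logDeriv_rpow_const {x : ℝ} (hf : DifferentiableAt ℝ f x) (hx : 0 < f x) (p : ℝ) :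
    logDeriv (fun y ↦ f y ^ p) x = p * logDeriv f x := by
  rw [logDeriv_apply, logDeriv_apply, (hf.hasDerivAt.rpow_const (Or.inl hx.ne')).deriv,
    rpow_sub_one hx.ne']
  have := rpow_pos_of_pos hx p
  field_simp

end LogDeriv

section ExpInequalities

lemma exp_mul_sub_one_le {θ : ℝ} (hθ₀ : 0 ≤ θ) (hθ₁ : θ ≤ 1) (x : ℝ) :
    exp (θ * x) - 1 ≤ θ * (exp x - 1) := by
  have hconv := convexOn_exp.2 (mem_univ 0) (mem_univ x) (sub_nonneg.2 hθ₁) hθ₀ (by ring)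
  simp only [smul_eq_mul, mul_zero, zero_add, exp_zero, mul_one] at hconv
  linarith

lemma two_sub_mul_exp_le_exp_one (u : ℝ) : (2 - u) * exp u ≤ exp 1 :=
  calc (2 - u) * exp u ≤ exp (1 - u) * exp u := by
        gcongr
        linarith [add_one_le_exp (1 - u)]
    _ = exp 1 := by rw [← exp_add, sub_add_cancel]

lemma three_mul_exp_sub_one_le {u : ℝ} (hu : 0 ≤ u) : 3 * (exp u - 1) ≤ u * (exp u + 3) := by
  have hderiv (x : ℝ) : HasDerivAt (fun x ↦ x * (exp x + 3) - 3 * (exp x - 1))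
      (3 - (2 - x) * exp x) x := by
    refine (((hasDerivAt_id x).mul ((hasDerivAt_exp x).add_const 3)).sub
      (((hasDerivAt_exp x).sub_const 1).const_mul 3)).congr_deriv ?_
    simp only [id]
    ring
  have hmono := monotone_of_hasDerivAt_nonneg hderiv fun x ↦
    sub_nonneg.2 ((two_sub_mul_exp_le_exp_one x).trans exp_one_lt_three.le)
  simpa using hmono hu

lemma three_mul_sub_le_of_le_mul_exp {u x y : ℝ} (hu : 0 ≤ u) (hx : 0 ≤ x) (hy : 0 ≤ y)
    (hxy : x ≤ y * exp u) : 3 * (x - y) ≤ u * (x + 3 * y) := by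
  rcases le_total u 3 with hu₃ | hu₃
  · have hlin : x * (3 - u) ≤ y * exp u * (3 - u) :=
      mul_le_mul_of_nonneg_right hxy (sub_nonneg.2 hu₃)
    have hexp := mul_le_mul_of_nonneg_left (three_mul_exp_sub_one_le hu) hy
    linarith
  · have hux : 3 * x ≤ u * x := mul_le_mul_of_nonneg_right hu₃ hx
    have huy : 0 ≤ u * y := mul_nonneg hu hy
    linarith

lemma rpow_le_rpow_mul_exp {x y p : ℝ} (hx : 0 ≤ x) (hy : 0 < y) (hp : 0 ≤ p) :
    x ^ p ≤ y ^ p * exp ((x / y - 1) * p) :=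
  calc x ^ p ≤ (y * exp (x / y - 1)) ^ p := by
        refine rpow_le_rpow hx ?_ hp
        rw [← div_le_iff₀' hy]
        linarith [add_one_le_exp (x / y - 1)]
    _ = y ^ p * exp ((x / y - 1) * p) := by rw [mul_rpow hy.le (exp_pos _).le, exp_mul]

lemma twenty_le_exp_three : 20 ≤ exp 3 :=
  calc (20 : ℝ) ≤ 2.718 ^ 3 := by norm_num
    _ ≤ exp 1 ^ 3 := by
        gcongr
        linarith [exp_one_gt_d9]
    _ = exp 3 := by rw [← exp_nat_mul]; norm_num

lemma ten_mul_le_three_mul_exp_half {s : ℝ} (hs : 6 ≤ s) : 10 * s ≤ 3 * exp (s / 2) := by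
  have hsplit : exp (s / 2) = exp 3 * exp (s / 2 - 3) := by rw [← exp_add, add_sub_cancel]
  have hprod : 20 * (s / 2 - 2) ≤ exp 3 * exp (s / 2 - 3) :=
    mul_le_mul twenty_le_exp_three (by linarith [add_one_le_exp (s / 2 - 3)]) (by linarith)
      (exp_pos 3).le
  linarith

end ExpInequalities

section QFunctions

lemma q_pos {x : ℝ} (hx : x ≠ 0) : 0 < q x := by
  unfold q
  linarith [add_one_lt_exp hx]

lemma q_nonneg (x : ℝ) : 0 ≤ q x := by
  unfold q
  linarith [add_one_le_exp x]

lemma hasDerivAt_q (x : ℝ) : HasDerivAt q (exp x - 1) x :=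
  ((hasDerivAt_exp x).sub (hasDerivAt_id x)).sub_const 1

lemma le_Qf {s : ℝ} (hs : s ≠ 0) : s ≤ Qf s := by
  rw [Qf, ← q, le_div_iff₀ (q_pos hs), q]
  linarith [mul_self_nonneg s]

lemma ten_mul_mul_exp_half_sub_one_le {s : ℝ} (hs : 6 ≤ s) :
    10 * s * (exp (s / 2) - 1) ≤ 3 * q s := by
  have hsq : exp s = exp (s / 2) * exp (s / 2) := by rw [← exp_add, add_halves]
  have hmul := mul_le_mul_of_nonneg_right (ten_mul_le_three_mul_exp_half hs) (exp_pos (s / 2)).le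
  rw [q, hsq]
  linarith

end QFunctions

section QFactor

/-- The first factor `3·q(sa)/q(s) + 1` of `OPT4`, as a function of `a`. -/
noncomputable def qFactor (s a : ℝ) : ℝ := 3 * q (s * a) / q s + 1

lemma one_le_qFactor (s a : ℝ) : 1 ≤ qFactor s a :=
  le_add_of_nonneg_left (div_nonneg (mul_nonneg three_pos.le (q_nonneg _)) (q_nonneg s))

lemma hasDerivAt_qFactor (s a : ℝ) :
    HasDerivAt (qFactor s) (3 * (s * (exp (s * a) - 1)) / q s) a := by
  have hinner : HasDerivAt (fun x ↦ s * x) s a := by simpa using (hasDerivAt_id a).const_mul s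
  refine ((((hasDerivAt_q (s * a)).comp a hinner).const_mul 3).div_const (q s)
    |>.add_const 1).congr_deriv ?_
  ring

lemma logDeriv_qFactor_le {s a : ℝ} (hs : 6 ≤ s) (ha₀ : 0 ≤ a) (ha : a ≤ 1 / 2) :
    logDeriv (qFactor s) a ≤ 9 / 5 * a := by
  have hchord : exp (s * a) - 1 ≤ 2 * a * (exp (s / 2) - 1) := by
    have h := exp_mul_sub_one_le (θ := 2 * a) (by linarith) (by linarith) (s / 2)
    rwa [show 2 * a * (s / 2) = s * a by ring] at h
  have hderiv : 3 * (s * (exp (s * a) - 1)) / q s ≤ 9 / 5 * a := by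
    rw [div_le_iff₀ (q_pos (by linarith))]
    calc 3 * (s * (exp (s * a) - 1)) ≤ 3 * (s * (2 * a * (exp (s / 2) - 1))) := by gcongr
      _ = 3 / 5 * a * (10 * s * (exp (s / 2) - 1)) := by ring
      _ ≤ 3 / 5 * a * (3 * q s) :=
          mul_le_mul_of_nonneg_left (ten_mul_mul_exp_half_sub_one_le hs) (by positivity)
      _ = 9 / 5 * a * q s := by ring
  have hfactor := one_le_qFactor s a
  rw [logDeriv_apply, (hasDerivAt_qFactor s a).deriv, div_le_iff₀ (by linarith)]
  exact hderiv.trans (le_mul_of_one_le_right (by linarith) hfactor)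

lemma logDeriv_qFactor_curve_le {s Q c : ℝ} (hs : 6 ≤ s) (hQ : 0 ≤ Q) (hc : 0 ≤ c)
    (hQc : Q * c ≤ 1) :
    logDeriv (fun c ↦ qFactor s (Q / 2 * c)) c ≤ 9 / 20 * (Q * (Q * c)) := by
  have hinner : HasDerivAt (fun x ↦ Q / 2 * x) (Q / 2) c := by
    simpa using (hasDerivAt_id c).const_mul (Q / 2)
  have hcomp := logDeriv_comp (hasDerivAt_qFactor s (Q / 2 * c)).differentiableAt
    hinner.differentiableAt
  rw [hinner.deriv] at hcomp
  calc logDeriv (fun c ↦ qFactor s (Q / 2 * c)) c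
      = logDeriv (qFactor s) (Q / 2 * c) * (Q / 2) := hcomp
    _ ≤ 9 / 5 * (Q / 2 * c) * (Q / 2) := by
        gcongr
        exact logDeriv_qFactor_le hs (by positivity) (by linarith)
    _ = 9 / 20 * (Q * (Q * c)) := by ring

end QFactor

section DampingFactor

/-- The second factor `(1/(1+ac))^Q` of `OPT4` on the curve `a = (Q/2)·c`. -/
noncomputable def dampingFactor (Q c : ℝ) : ℝ := (1 / (1 + Q / 2 * c * c)) ^ Q

variable {Q : ℝ}

lemma one_le_one_add_half_mul_mul_self (hQ : 0 ≤ Q) (c : ℝ) : 1 ≤ 1 + Q / 2 * c * c := by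
  rw [mul_assoc]
  exact le_add_of_nonneg_right (mul_nonneg (by linarith) (mul_self_nonneg c))

lemma hasDerivAt_one_div_one_add_half_mul_mul_self (hQ : 0 ≤ Q) (c : ℝ) :
    HasDerivAt (fun c ↦ 1 / (1 + Q / 2 * c * c)) (-(Q * c) / (1 + Q / 2 * c * c) ^ 2) c := by
  have hbase : HasDerivAt (fun c ↦ 1 + Q / 2 * c * c) (Q * c) c := by
    refine ((((hasDerivAt_id c).const_mul (Q / 2)).mul (hasDerivAt_id c)).const_add
      1).congr_deriv ?_
    simp only [id]
    ring
  have hne := (zero_lt_one.trans_le (one_le_one_add_half_mul_mul_self hQ c)).ne'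
  simpa only [one_div] using hbase.fun_inv hne

lemma dampingFactor_pos (hQ : 0 ≤ Q) (c : ℝ) : 0 < dampingFactor Q c :=
  rpow_pos_of_pos
    (one_div_pos.2 (zero_lt_one.trans_le (one_le_one_add_half_mul_mul_self hQ c))) Q

lemma differentiable_dampingFactor (hQ : 0 ≤ Q) : Differentiable ℝ (dampingFactor Q) := fun c ↦
  (hasDerivAt_one_div_one_add_half_mul_mul_self hQ c).differentiableAt.rpow_const
    (Or.inl (one_div_pos.2 (zero_lt_one.trans_le (one_le_one_add_half_mul_mul_self hQ c))).ne')

lemma logDeriv_dampingFactor (hQ : 0 ≤ Q) (c : ℝ) :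
    logDeriv (dampingFactor Q) c = -(Q * (Q * c) / (1 + Q / 2 * c * c)) := by
  have hbase := zero_lt_one.trans_le (one_le_one_add_half_mul_mul_self hQ c)
  have hderiv := hasDerivAt_one_div_one_add_half_mul_mul_self hQ c
  have hrpow := logDeriv_rpow_const hderiv.differentiableAt (one_div_pos.2 hbase) Q
  rw [logDeriv_apply (fun c ↦ 1 / (1 + Q / 2 * c * c)), hderiv.deriv] at hrpow
  refine hrpow.trans ?_
  field_simp

lemma logDeriv_dampingFactor_le {c : ℝ} (hQ : 6 ≤ Q) (hc : 0 ≤ c) (hQc : Q * c ≤ 1) :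
    logDeriv (dampingFactor Q) c ≤ -(12 / 13 * (Q * (Q * c))) := by
  have hc₆ : 6 * c ≤ 1 := (mul_le_mul_of_nonneg_right hQ hc).trans hQc
  have hbase : 1 + Q / 2 * c * c ≤ 13 / 12 := by
    have hsq : Q * c * c ≤ 1 * c := mul_le_mul_of_nonneg_right hQc hc
    linarith
  have hrate : 0 ≤ 12 / 13 * (Q * (Q * c)) := by positivity
  rw [logDeriv_dampingFactor (by linarith), neg_le_neg_iff, le_div_iff₀ (by positivity)]
  linarith [mul_le_mul_of_nonneg_left hbase hrate]

end DampingFactor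

section PowerSum

/-- The third factor `(1+c)^Q + 3·(1−c/3)^Q` of `OPT4`. -/
noncomputable def powerSum (Q c : ℝ) : ℝ := (1 + c) ^ Q + 3 * (1 - c / 3) ^ Q

variable {Q c : ℝ}

lemma powerSum_pos (hc : -1 < c) (hc₃ : c ≤ 3) : 0 < powerSum Q c :=
  add_pos_of_pos_of_nonneg (rpow_pos_of_pos (by linarith) Q)
    (mul_nonneg three_pos.le (rpow_nonneg (by linarith) Q))

lemma hasDerivAt_powerSum (hQ : 1 ≤ Q) (c : ℝ) :
    HasDerivAt (powerSum Q) (Q * ((1 + c) ^ (Q - 1) - (1 - c / 3) ^ (Q - 1))) c := by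
  have hplus := ((hasDerivAt_id c).const_add 1).rpow_const (p := Q) (Or.inr hQ)
  have hminus := (((hasDerivAt_id c).div_const 3).const_sub 1).rpow_const (p := Q) (Or.inr hQ)
  refine (hplus.add (hminus.const_mul 3)).congr_deriv ?_
  simp only [id]
  ring

lemma one_add_rpow_le_one_sub_rpow_mul_exp (hQ : 1 ≤ Q) (hc : 0 ≤ c) (hc₃ : c < 3)
    (hQc : Q * c ≤ 3) :
    (1 + c) ^ (Q - 1) ≤ (1 - c / 3) ^ (Q - 1) * exp (4 / 3 * (Q * c)) := by
  have hminus : 0 < 1 - c / 3 := by linarith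
  refine (rpow_le_rpow_mul_exp (by linarith) hminus (sub_nonneg.2 hQ)).trans ?_
  have hexponent : ((1 + c) / (1 - c / 3) - 1) * (Q - 1) ≤ 4 / 3 * (Q * c) := by
    have hratio : ((1 + c) / (1 - c / 3) - 1) * (Q - 1) =
        4 / 3 * c * (Q - 1) / (1 - c / 3) := by
      rw [div_sub_one hminus.ne']
      ring
    rw [hratio, div_le_iff₀ hminus]
    linarith [mul_le_mul_of_nonneg_left hQc hc]
  gcongr

lemma rpow_sub_one_add_le_powerSum (hQ : 1 ≤ Q) (hc : 0 ≤ c) (hc₃ : c < 3) :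
    (1 + c) ^ (Q - 1) + 3 * (1 - c / 3) ^ (Q - 1) ≤ powerSum Q c := by
  have hminus : 0 < 1 - c / 3 := by linarith
  have hplus : 0 < 1 + c := by linarith
  have hle : (1 - c / 3) ^ (Q - 1) ≤ (1 + c) ^ (Q - 1) :=
    rpow_le_rpow hminus.le (by linarith) (sub_nonneg.2 hQ)
  have hsplit {x : ℝ} (hx : 0 < x) : x ^ Q = x ^ (Q - 1) * x := by
    rw [← rpow_add_one hx.ne', sub_add_cancel]
  rw [powerSum, hsplit hminus, hsplit hplus]
  linarith [mul_le_mul_of_nonneg_right hle hc]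

lemma logDeriv_powerSum_le (hQ : 1 ≤ Q) (hc : 0 ≤ c) (hc₃ : c < 3) (hQc : Q * c ≤ 3) :
    logDeriv (powerSum Q) c ≤ 4 / 9 * (Q * (Q * c)) := by
  have hplus : 0 ≤ (1 + c) ^ (Q - 1) := rpow_nonneg (by linarith) _
  have hminus : 0 ≤ (1 - c / 3) ^ (Q - 1) := rpow_nonneg (by linarith) _
  have hdiff := three_mul_sub_le_of_le_mul_exp (by positivity) hplus hminus
    (one_add_rpow_le_one_sub_rpow_mul_exp hQ hc hc₃ hQc)
  rw [logDeriv_apply, (hasDerivAt_powerSum hQ c).deriv,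
    div_le_iff₀ (powerSum_pos (by linarith) hc₃.le)]
  calc Q * ((1 + c) ^ (Q - 1) - (1 - c / 3) ^ (Q - 1))
      ≤ Q * (4 / 9 * (Q * c) * ((1 + c) ^ (Q - 1) + 3 * (1 - c / 3) ^ (Q - 1))) := by
        gcongr
        linarith
    _ ≤ Q * (4 / 9 * (Q * c) * powerSum Q c) := by
        gcongr
        exact rpow_sub_one_add_le_powerSum hQ hc hc₃
    _ = 4 / 9 * (Q * (Q * c)) * powerSum Q c := by ring

end PowerSum

section Curve

variable {s c : ℝ}

lemma OPT4_curve_eq (s c : ℝ) : OPT4 (Qf s / 2 * c) c s =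
    qFactor s (Qf s / 2 * c) * dampingFactor (Qf s) c * powerSum (Qf s) c := rfl

lemma differentiable_qFactor_curve (s Q : ℝ) :
    Differentiable ℝ (fun c ↦ qFactor s (Q / 2 * c)) :=
  Differentiable.comp (fun a ↦ (hasDerivAt_qFactor s a).differentiableAt)
    (differentiable_id.const_mul (Q / 2))

lemma differentiable_OPT4_curve (hQ : 1 ≤ Qf s) :
    Differentiable ℝ (fun c ↦ OPT4 (Qf s / 2 * c) c s) :=
  ((differentiable_qFactor_curve s (Qf s)).mul (differentiable_dampingFactor (by linarith))).mul
    fun c ↦ (hasDerivAt_powerSum hQ c).differentiableAt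

lemma OPT4_curve_pos (hQ : 0 ≤ Qf s) (hc : -1 < c) (hc₃ : c ≤ 3) :
    0 < OPT4 (Qf s / 2 * c) c s :=
  mul_pos (mul_pos (zero_lt_one.trans_le (one_le_qFactor _ _)) (dampingFactor_pos hQ c))
    (powerSum_pos hc hc₃)

lemma logDeriv_OPT4_curve (hQ : 1 ≤ Qf s) (hc : -1 < c) (hc₃ : c ≤ 3) :
    logDeriv (fun c ↦ OPT4 (Qf s / 2 * c) c s) c =
      logDeriv (fun c ↦ qFactor s (Qf s / 2 * c)) c + logDeriv (dampingFactor (Qf s)) c +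
        logDeriv (powerSum (Qf s)) c := by
  have hQ₀ : 0 ≤ Qf s := by linarith
  have hq := (zero_lt_one.trans_le (one_le_qFactor s (Qf s / 2 * c))).ne'
  have hd := (dampingFactor_pos hQ₀ c).ne'
  have hqDiff := differentiable_qFactor_curve s (Qf s) c
  have hdDiff := differentiable_dampingFactor hQ₀ c
  simp only [OPT4_curve_eq]
  rw [logDeriv_mul (f := fun c ↦ qFactor s (Qf s / 2 * c) * dampingFactor (Qf s) c) c
    (mul_ne_zero hq hd) (powerSum_pos hc hc₃).ne' (hqDiff.mul hdDiff)
    (hasDerivAt_powerSum hQ c).differentiableAt, logDeriv_mul c hq hd hqDiff hdDiff]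

lemma logDeriv_OPT4_curve_neg (hs : 6 ≤ s) (hc : 0 < c) (hQc : Qf s * c ≤ 1) :
    logDeriv (fun c ↦ OPT4 (Qf s / 2 * c) c s) c < 0 := by
  have hQ : 6 ≤ Qf s := hs.trans (le_Qf (by linarith))
  have hc₁ : c ≤ 1 := (le_mul_of_one_le_left hc.le (by linarith)).trans hQc
  have hfirst := logDeriv_qFactor_curve_le hs (by linarith) hc.le hQc
  have hsecond := logDeriv_dampingFactor_le hQ hc.le hQc
  have hthird := logDeriv_powerSum_le (by linarith) hc.le (by linarith)
    (hQc.trans (by norm_num))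
  have hrate : 0 < Qf s * (Qf s * c) := by positivity
  rw [logDeriv_OPT4_curve (by linarith) (by linarith) (by linarith)]
  linarith

end Curve

theorem stmt18 (s : ℝ) (hs : 6 ≤ s) :
    StrictAntiOn (fun c => OPT4 (Qf s / 2 * c) c s) (Set.Ioc (0:ℝ) (1/Qf s)) := by
  have hQ : 6 ≤ Qf s := hs.trans (le_Qf (by linarith))
  have hbounds {c : ℝ} (hc : c ∈ interior (Ioc 0 (1 / Qf s))) : 0 < c ∧ Qf s * c ≤ 1 :=
    ⟨(interior_subset hc).1, (le_div_iff₀' (by linarith)).1 (interior_subset hc).2⟩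
  refine strictAntiOn_of_logDeriv_neg (convex_Ioc _ _)
    (differentiable_OPT4_curve (by linarith)).continuous.continuousOn (fun c hc ↦ ?_)
    fun c hc ↦ logDeriv_OPT4_curve_neg hs (hbounds hc).1 (hbounds hc).2
  obtain ⟨hc₀, hQc⟩ := hbounds hc
  have hc₁ : c ≤ 1 := (le_mul_of_one_le_left hc₀.le (by linarith)).trans hQc
  exact OPT4_curve_pos (by linarith) (by linarith) (by linarith)
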